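/- Let f : ℝ → ℝ be specularly differentiable at every point of an open interval (a, b), with f continuous on (a, b) and the function x ↦ f^S(x) continuous on (a, b). Then for every x ∈ (a, b), f is differentiable at x and f'(x) = f^S(x). -/

import Mathlib

open Filter Topology Set

/-- The combination function `A(α,β)` from the paper: the slope of the specular
tangent determined by one-sided slopes `α` (right) and `β` (left). -/
noncomputable def specA (α β : ℝ) : ℝ :=
  if α + β = 0 then 0
  else (α * β - 1 + Real.sqrt ((α ^ 2 + 1) * (β ^ 2 + 1))) / (α + β)

/-- `HasSpecData f x₀ L α β` means: the left and right limits of `f` at `x₀` both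
exist and are equal to `L`, the right specular derivative of `f` at `x₀` is `α`,
and the left specular derivative of `f` at `x₀` is `β`. -/
def HasSpecData (f : ℝ → ℝ) (x₀ L α β : ℝ) : Prop :=
  Tendsto f (𝓝[<] x₀) (𝓝 L) ∧ Tendsto f (𝓝[>] x₀) (𝓝 L) ∧
    Tendsto (fun x => (f x - L) / (x - x₀)) (𝓝[>] x₀) (𝓝 α) ∧
    Tendsto (fun x => (f x - L) / (x - x₀)) (𝓝[<] x₀) (𝓝 β)

/-- `f` is specularly differentiable at `x₀`. -/
def SpecDifferentiableAt (f : ℝ → ℝ) (x₀ : ℝ) : Prop :=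
  ∃ L α β, HasSpecData f x₀ L α β

/-- `f` is specularly differentiable at `x₀` with specular derivative `d`. -/
def HasSpecDerivAt (f : ℝ → ℝ) (x₀ d : ℝ) : Prop :=
  ∃ L α β, HasSpecData f x₀ L α β ∧ d = specA α β

theorem le_of_sq_le_sq_aux {x y : ℝ} (h : x ^ 2 ≤ y ^ 2) (hy : 0 ≤ y) : x ≤ y :=
  (abs_le.1 (abs_le_of_sq_le_sq h hy)).2

theorem specA_le (α β m : ℝ) (h1 : α ≤ m) (h2 : β ≤ m) : specA α β ≤ m := by
  unfold specA
  split_ifs with h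
  · linarith
  · have hs := Real.sqrt_nonneg ((α ^ 2 + 1) * (β ^ 2 + 1))
    have hs2 := Real.sq_sqrt (show 0 ≤ (α ^ 2 + 1) * (β ^ 2 + 1) by positivity)
    set s := Real.sqrt ((α ^ 2 + 1) * (β ^ 2 + 1))
    rcases lt_or_gt_of_ne h with h | h
    · rw [div_le_iff_of_neg h]
      rcases le_total β α with hab | hab
      · have : β ^ 2 ≥ α ^ 2 := by nlinarith
        have : α ^ 2 + 1 ≤ s := by
          refine le_of_sq_le_sq_aux ?_ hs
          rw [hs2]; nlinarith [sq_nonneg α]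
        nlinarith
      · have : α ^ 2 ≥ β ^ 2 := by nlinarith
        have : β ^ 2 + 1 ≤ s := by
          refine le_of_sq_le_sq_aux ?_ hs
          rw [hs2]; nlinarith [sq_nonneg β]
        nlinarith
    · rw [div_le_iff₀ h]
      rcases le_total β α with hab | hab
      · have : β ^ 2 ≤ α ^ 2 := by nlinarith
        have : s ≤ α ^ 2 + 1 := by
          refine le_of_sq_le_sq_aux ?_ (by positivity)
          rw [hs2]; nlinarith [sq_nonneg α]
        nlinarith
      · have : α ^ 2 ≤ β ^ 2 := by nlinarith
        have : s ≤ β ^ 2 + 1 := by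
          refine le_of_sq_le_sq_aux ?_ (by positivity)
          rw [hs2]; nlinarith [sq_nonneg β]
        nlinarith

theorem specA_neg (α β : ℝ) : specA (-α) (-β) = -specA α β := by
  unfold specA
  by_cases h : α + β = 0
  · rw [if_pos h, if_pos (by linarith)]; simp
  · rw [if_neg h, if_neg (fun h' => h (by linarith)), ← div_neg]
    congr 1 <;> ring_nf

theorem HasSpecDerivAt.neg' {f : ℝ → ℝ} {x d : ℝ} (h : HasSpecDerivAt f x d) :
    HasSpecDerivAt (fun y => -f y) x (-d) := by
  obtain ⟨L, α, β, ⟨h1, h2, h3, h4⟩, rfl⟩ := h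
  refine ⟨-L, -α, -β, ⟨h1.neg, h2.neg, ?_, ?_⟩, (specA_neg _ _).symm⟩
  · refine h3.neg.congr fun y => ?_
    ring
  · refine h4.neg.congr fun y => ?_
    ring

theorem spec_lower (f g : ℝ → ℝ) (p q m : ℝ) (hpq : p ≤ q)
    (hcont : ContinuousOn f (Set.Icc p q))
    (hspec : ∀ x ∈ Set.Ioo p q, HasSpecDerivAt f x (g x))
    (hm : ∀ x ∈ Set.Ioo p q, m < g x) : m * (q - p) ≤ f q - f p := by
  by_contra! hlt
  obtain ⟨k, hk1, hk2⟩ := exists_between (show f q - m * q < f p - m * p by linarith)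
  have hh : ContinuousOn (fun x => f x - m * x) (Set.Icc p q) := by fun_prop
  set S : Set ℝ := {x | x ∈ Set.Icc p q ∧ f x - m * x < k} with hS
  have hqS : q ∈ S := ⟨⟨hpq, le_rfl⟩, hk1⟩
  have hbdd : BddBelow S := ⟨p, fun x hx => hx.1.1⟩
  set c := sInf S with hc
  have hcp : p ≤ c := le_csInf ⟨q, hqS⟩ fun x hx => hx.1.1
  have hcq : c ≤ q := csInf_le hbdd hqS
  have hcl : c ∈ closure S := csInf_mem_closure ⟨q, hqS⟩ hbdd
  have hck : f c - m * c ≤ k := by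
    refine ContinuousWithinAt.closure_le (f := fun x => f x - m * x) (g := fun _ => k) hcl
      ((hh c ⟨hcp, hcq⟩).mono fun x hx => hx.1) continuousWithinAt_const
      fun x hx => hx.2.le
  have hcp' : p < c := by
    rcases hcp.lt_or_eq with h | h
    · exact h
    · rw [← h] at hck; linarith
  have hleft : ∀ x, p ≤ x → x < c → k ≤ f x - m * x := by
    intro x hx hxc
    by_contra! h
    exact absurd (csInf_le hbdd (show x ∈ S from ⟨⟨hx, by linarith⟩, h⟩)) (not_le.2 hxc)
  have hevl : ∀ᶠ x in 𝓝[<] c, x ∈ Set.Ioo p c := Ioo_mem_nhdsLT hcp'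
  have hck' : k ≤ f c - m * c := by
    have ht : Tendsto (fun x => f x - m * x) (𝓝[<] c) (𝓝 (f c - m * c)) := by
      refine (hh c ⟨hcp, hcq⟩).tendsto.mono_left ?_
      refine nhdsWithin_le_iff.2 ?_
      filter_upwards [hevl] with x hx
      exact ⟨hx.1.le, by linarith [hx.2]⟩
    refine ge_of_tendsto ht ?_
    filter_upwards [hevl] with x hx
    exact hleft x hx.1.le hx.2
  have hcq' : c < q := by
    rcases hcq.lt_or_eq with h | h
    · exact h
    · rw [h] at hck'; linarith
  obtain ⟨L, α, β, ⟨h1, h2, h3, h4⟩, hd⟩ := hspec c ⟨hcp', hcq'⟩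
  have hL : L = f c := by
    have : ContinuousAt f c := hcont.continuousAt (Icc_mem_nhds hcp' hcq')
    exact tendsto_nhds_unique h1 (this.tendsto.mono_left nhdsWithin_le_nhds)
  subst hL
  have hβ : β ≤ m := by
    refine le_of_tendsto h4 ?_
    filter_upwards [hevl] with x hx
    have := hleft x hx.1.le hx.2
    rw [div_le_iff_of_neg (by linarith [hx.2])]
    linarith
  have hα : α ≤ m := by
    refine le_of_tendsto_of_frequently h3 ?_
    rw [(nhdsGT_basis c).frequently_iff]
    intro u hu
    obtain ⟨s, hs, hsu⟩ := exists_lt_of_csInf_lt ⟨q, hqS⟩ (show sInf S < u from hu)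
    have hcs : c < s := by
      rcases (csInf_le hbdd hs).lt_or_eq with h | h
      · exact h
      · have := hs.2
        rw [← h] at this
        linarith
    refine ⟨s, ⟨hcs, hsu⟩, ?_⟩
    rw [div_le_iff₀ (by linarith)]
    linarith [hs.2]
  have := specA_le α β m hα hβ
  linarith [hm c ⟨hcp', hcq'⟩]

theorem spec_upper (f g : ℝ → ℝ) (p q m : ℝ) (hpq : p ≤ q)
    (hcont : ContinuousOn f (Set.Icc p q))
    (hspec : ∀ x ∈ Set.Ioo p q, HasSpecDerivAt f x (g x))
    (hm : ∀ x ∈ Set.Ioo p q, g x < m) : f q - f p ≤ m * (q - p) := by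
  have := spec_lower (fun x => -f x) (fun x => -g x) p q (-m) hpq hcont.neg
    (fun x hx => (hspec x hx).neg') (fun x hx => neg_lt_neg (hm x hx))
  linarith

theorem deriv_eq_specular_of_continuous (f g : ℝ → ℝ) (a b : ℝ)
    (hcont : ContinuousOn f (Set.Ioo a b))
    (hspec : ∀ x ∈ Set.Ioo a b, HasSpecDerivAt f x (g x))
    (hg : ContinuousOn g (Set.Ioo a b)) :
    ∀ x ∈ Set.Ioo a b, HasDerivAt f (g x) x := by
  intro x hx
  rw [hasDerivAt_iff_isLittleO, Asymptotics.isLittleO_iff]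
  intro ε hε
  have hgx : ContinuousAt g x := hg.continuousAt (Ioo_mem_nhds hx.1 hx.2)
  have hev : ∀ᶠ y in 𝓝 x, y ∈ Set.Ioo a b ∧ g x - ε < g y ∧ g y < g x + ε :=
    Filter.Eventually.and (Ioo_mem_nhds hx.1 hx.2)
      ((hgx.eventually (lt_mem_nhds (by linarith))).and
        (hgx.eventually (gt_mem_nhds (by linarith))))
  obtain ⟨δ, hδ, hball⟩ := Metric.eventually_nhds_iff_ball.1 hev
  have main : ∀ p ∈ Metric.ball x δ, ∀ q ∈ Metric.ball x δ, p ≤ q →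
      (g x - ε) * (q - p) ≤ f q - f p ∧ f q - f p ≤ (g x + ε) * (q - p) := by
    intro p hp q hq hpq
    have hsub : Set.Icc p q ⊆ Metric.ball x δ := by
      rw [Real.ball_eq_Ioo] at *
      exact fun z hz => ⟨by linarith [hp.1, hz.1], by linarith [hq.2, hz.2]⟩
    have hc : ContinuousOn f (Set.Icc p q) := hcont.mono fun z hz => (hball z (hsub hz)).1
    have hI : ∀ z ∈ Set.Ioo p q, z ∈ Metric.ball x δ :=
      fun z hz => hsub (Ioo_subset_Icc_self hz)
    exact ⟨spec_lower f g p q _ hpq hc (fun z hz => hspec z (hball z (hI z hz)).1)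
        (fun z hz => (hball z (hI z hz)).2.1),
      spec_upper f g p q _ hpq hc (fun z hz => hspec z (hball z (hI z hz)).1)
        (fun z hz => (hball z (hI z hz)).2.2)⟩
  filter_upwards [Metric.ball_mem_nhds x hδ] with y hy
  have hxx := Metric.mem_ball_self (x := x) hδ
  rw [Real.norm_eq_abs, Real.norm_eq_abs, smul_eq_mul]
  rcases le_total x y with h | h
  · obtain ⟨h1, h2⟩ := main x hxx y hy h
    rw [abs_of_nonneg (sub_nonneg.2 h), abs_le]
    constructor <;> linarith
  · obtain ⟨h1, h2⟩ := main y hy x hxx h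
    rw [abs_of_nonpos (sub_nonpos.2 h), abs_le]
    constructor <;> linarith
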